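/- arXiv:2602.10247 — 2 statements merged into one kernel-verified Lean document; each statement's English description precedes it below -/
import Mathlib

section
/- Let X : Ω → ℝ^n and E : Ω → ℝ^m be independent random vectors with X distributed as the multivariate Gaussian N(x₀, Γ), where Γ ∈ ℝ^{n×n} is symmetric positive definite, and E distributed as N(0, Σ), where Σ ∈ ℝ^{m×m} is symmetric positive definite. Let A ∈ ℝ^{n×m} and define B = Aᵀ X + E. Then for (law of B)-almost every b ∈ ℝ^m, the regular conditional distribution of X given B = b is the multivariate Gaussian N(x̄, C) with mean x̄ = x₀ + Γ A (Aᵀ Γ A + Σ)⁻¹ (b − Aᵀ x₀) and covariance C = Γ − Γ A (Aᵀ Γ A + Σ)⁻¹ Aᵀ Γ. -/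
open MeasureTheory ProbabilityTheory Matrix

/-- The multivariate Gaussian law `N(m, C)` on `ι → ℝ`, characterized by its characteristic
function `t ↦ exp(i tᵀ m − tᵀ C t / 2)`. -/
def IsGaussianLaw {ι : Type*} [Fintype ι] (μ : Measure (ι → ℝ)) (m : ι → ℝ)
    (C : Matrix ι ι ℝ) : Prop :=
  IsProbabilityMeasure μ ∧
    ∀ t : ι → ℝ,
      (∫ x, Complex.exp (Complex.I * ((t ⬝ᵥ x : ℝ) : ℂ)) ∂μ) =
        Complex.exp (Complex.I * ((t ⬝ᵥ m : ℝ) : ℂ) - ((t ⬝ᵥ C.mulVec t : ℝ) : ℂ) / 2)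

/-!
If `(X, B)` is jointly Gaussian and `K` solves the normal equations `K Cov(B) = Cov(X, B)`, then
the residual `R = X - K B` is uncorrelated with `B`, and for jointly Gaussian vectors this means
independent. Hence conditioning on `B = b` does not affect `R`, and `X = R + K B` has conditional
law that of `R` translated by `K b`. In the linear model the pair `(X, B)` is a linear image of
`(X, E)`, with `Cov(X, B) = Γ A` and `Cov(B) = Aᵀ Γ A + Σ`, so that `K = Γ A (Aᵀ Γ A + Σ)⁻¹`.
-/

lemma posDef_transpose_mul_mul_same_add {ι κ : Type*} [Fintype ι] [Finite κ]
    {Γ : Matrix ι ι ℝ} {S : Matrix κ κ ℝ} (hΓ : Γ.PosSemidef) (hS : S.PosDef)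
    (A : Matrix ι κ ℝ) : (Aᵀ * Γ * A + S).PosDef :=
  .posSemidef_add (by simpa using hΓ.conjTranspose_mul_mul_same A) hS

lemma measurableEmbedding_sumElim {ι κ β : Type*} [MeasurableSpace β] :
    MeasurableEmbedding fun p : (ι → β) × (κ → β) ↦ Sum.elim p.1 p.2 :=
  (MeasurableEquiv.sumPiEquivProdPi fun _ : ι ⊕ κ ↦ β).symm.measurableEmbedding

lemma ae_condDistrib_eq_map_of_indepFun {Ω β γ δ : Type*} [MeasurableSpace Ω]
    [MeasurableSpace β] [MeasurableSpace γ] [MeasurableSpace δ] [StandardBorelSpace δ]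
    [Nonempty δ] {P : Measure Ω} [IsFiniteMeasure P] {Y : Ω → β} {Z : Ω → γ}
    (hY : AEMeasurable Y P) (hZ : AEMeasurable Z P) (hYZ : IndepFun Y Z P)
    {f : β × γ → δ} (hf : Measurable f) :
    ∀ᵐ y ∂P.map Y,
      condDistrib (fun ω ↦ f (Y ω, Z ω)) Y P y = (P.map Z).map fun z ↦ f (y, z) := by
  let κ : Kernel β δ := (Kernel.id ×ₖ Kernel.const β (P.map Z)).map f
  have hκ (y : β) : κ y = (P.map Z).map fun z ↦ f (y, z) := by
    rw [Kernel.map_apply _ hf, Kernel.prod_apply, Kernel.id_apply, Kernel.const_apply,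
      Measure.dirac_prod, Measure.map_map hf measurable_prodMk_left, Function.comp_def]
  have hg : Measurable fun p : β × γ ↦ (p.1, f p) := by fun_prop
  have joint : P.map (fun ω ↦ (Y ω, f (Y ω, Z ω))) = P.map Y ⊗ₘ κ := by
    calc P.map (fun ω ↦ (Y ω, f (Y ω, Z ω)))
        = ((P.map Y).prod (P.map Z)).map fun p ↦ (p.1, f p) := by
          rw [← (indepFun_iff_map_prod_eq_prod_map_map hY hZ).1 hYZ,
            AEMeasurable.map_map_of_aemeasurable hg.aemeasurable (hY.prodMk hZ),
            Function.comp_def]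
      _ = P.map Y ⊗ₘ κ := by
          ext s hs
          rw [Measure.map_apply hg hs, Measure.prod_apply (hg hs), Measure.compProd_apply hs]
          refine lintegral_congr fun y ↦ ?_
          rw [hκ, Measure.map_apply (by fun_prop) (measurable_prodMk_left hs)]
          rfl
  have hfYZ : AEMeasurable (fun ω ↦ f (Y ω, Z ω)) P := hf.comp_aemeasurable (hY.prodMk hZ)
  filter_upwards [condDistrib_ae_eq_of_measure_eq_compProd Y hfYZ joint] with y hy
  rw [hy, hκ]

namespace IsGaussianLaw

variable {ι κ Ω : Type*} [Fintype ι] [Fintype κ] [MeasurableSpace Ω] {P : Measure Ω}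

section Basic

variable {μ ν : Measure (ι → ℝ)} {m : ι → ℝ} {C : Matrix ι ι ℝ} {X : Ω → ι → ℝ}

lemma unique (hμ : IsGaussianLaw μ m C) (hν : IsGaussianLaw ν m C) : μ = ν := by
  classical
  have := hμ.1
  have := hν.1
  refine Measure.ext_of_charFunDual (funext fun L ↦ ?_)
  have hL (x : ι → ℝ) : L x = (dotProductEquiv ℝ ι).symm L.toLinearMap ⬝ᵥ x :=
    (LinearMap.congr_fun ((dotProductEquiv ℝ ι).apply_symm_apply L.toLinearMap) x).symm
  simp only [charFunDual_apply, hL, mul_comm _ Complex.I, hμ.2, hν.2]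

lemma aemeasurable (h : IsGaussianLaw (P.map X) m C) : AEMeasurable X P :=
  have := h.1
  .of_map_ne_zero (NeZero.ne _)

lemma map_mulVec (h : IsGaussianLaw (P.map X) m C) (L : Matrix κ ι ℝ) :
    IsGaussianLaw (P.map fun ω ↦ L *ᵥ X ω) (L *ᵥ m) (L * C * Lᵀ) := by
  have := h.1
  have hX := h.aemeasurable
  have hL : Measurable fun x : ι → ℝ ↦ L *ᵥ x := by fun_prop
  have hmap : P.map (fun ω ↦ L *ᵥ X ω) = (P.map X).map fun x ↦ L *ᵥ x :=
    (AEMeasurable.map_map_of_aemeasurable hL.aemeasurable hX).symm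
  rw [hmap]
  refine ⟨Measure.isProbabilityMeasure_map hL.aemeasurable, fun t ↦ ?_⟩
  have quadratic : t ⬝ᵥ (L * C * Lᵀ) *ᵥ t = (t ᵥ* L) ⬝ᵥ C *ᵥ (t ᵥ* L) := by
    rw [← mulVec_mulVec, ← mulVec_mulVec, mulVec_transpose, dotProduct_mulVec]
  rw [integral_map hL.aemeasurable (by fun_prop), quadratic]
  simpa only [dotProduct_mulVec] using h.2 (t ᵥ* L)

lemma map_add_const (h : IsGaussianLaw μ m C) (c : ι → ℝ) :
    IsGaussianLaw (μ.map (· + c)) (m + c) C := by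
  have := h.1
  refine ⟨Measure.isProbabilityMeasure_map (by fun_prop), fun t ↦ ?_⟩
  rw [integral_map (by fun_prop) (by fun_prop)]
  have hexp (x : ι → ℝ) : Complex.exp (Complex.I * ((t ⬝ᵥ (x + c) : ℝ) : ℂ)) =
      Complex.exp (Complex.I * ((t ⬝ᵥ x : ℝ) : ℂ)) *
        Complex.exp (Complex.I * ((t ⬝ᵥ c : ℝ) : ℂ)) := by
    rw [← Complex.exp_add, dotProduct_add, Complex.ofReal_add, mul_add]
  simp only [hexp]
  rw [integral_mul_const, h.2, ← Complex.exp_add, dotProduct_add, Complex.ofReal_add]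
  ring_nf

end Basic

section Joint

variable {X : Ω → ι → ℝ} {Y : Ω → κ → ℝ} {m₁ : ι → ℝ} {m₂ : κ → ℝ}
  {C₁₁ : Matrix ι ι ℝ} {C₁₂ : Matrix ι κ ℝ} {C₂₁ : Matrix κ ι ℝ} {C₂₂ : Matrix κ κ ℝ}

lemma map_sumElim_prod {μ : Measure (ι → ℝ)} {ν : Measure (κ → ℝ)}
    (hμ : IsGaussianLaw μ m₁ C₁₁) (hν : IsGaussianLaw ν m₂ C₂₂) :
    IsGaussianLaw ((μ.prod ν).map fun p ↦ Sum.elim p.1 p.2) (Sum.elim m₁ m₂)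
      (fromBlocks C₁₁ 0 0 C₂₂) := by
  have := hμ.1
  have := hν.1
  have hmeas := (measurableEmbedding_sumElim (β := ℝ) (ι := ι) (κ := κ)).measurable.aemeasurable
    (μ := μ.prod ν)
  refine ⟨Measure.isProbabilityMeasure_map hmeas, fun t ↦ ?_⟩
  obtain ⟨s, u, rfl⟩ : ∃ s u, t = Sum.elim s u := ⟨_, _, (Sum.elim_comp_inl_inr t).symm⟩
  rw [integral_map hmeas (by fun_prop)]
  simp only [fromBlocks_mulVec, Sum.elim_comp_inl, Sum.elim_comp_inr, zero_mulVec, add_zero,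
    zero_add, sumElim_dotProduct_sumElim, Complex.ofReal_add, mul_add, Complex.exp_add]
  rw [integral_prod_mul (fun x : ι → ℝ ↦ Complex.exp (Complex.I * ((s ⬝ᵥ x : ℝ) : ℂ)))
    (fun y : κ → ℝ ↦ Complex.exp (Complex.I * ((u ⬝ᵥ y : ℝ) : ℂ))), hμ.2, hν.2,
    ← Complex.exp_add]
  ring_nf

lemma map_sumElim_of_indepFun [IsFiniteMeasure P] (hX : IsGaussianLaw (P.map X) m₁ C₁₁)
    (hY : IsGaussianLaw (P.map Y) m₂ C₂₂) (hXY : IndepFun X Y P) :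
    IsGaussianLaw (P.map fun ω ↦ Sum.elim (X ω) (Y ω)) (Sum.elim m₁ m₂)
      (fromBlocks C₁₁ 0 0 C₂₂) := by
  have hprod := hX.map_sumElim_prod hY
  rwa [← (indepFun_iff_map_prod_eq_prod_map_map hX.aemeasurable hY.aemeasurable).1 hXY,
    AEMeasurable.map_map_of_aemeasurable measurableEmbedding_sumElim.measurable.aemeasurable
      (hX.aemeasurable.prodMk hY.aemeasurable)] at hprod

lemma map_left_of_map_sumElim
    (h : IsGaussianLaw (P.map fun ω ↦ Sum.elim (X ω) (Y ω)) (Sum.elim m₁ m₂)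
      (fromBlocks C₁₁ C₁₂ C₂₁ C₂₂)) :
    IsGaussianLaw (P.map X) m₁ C₁₁ := by
  classical
  simpa [fromCols_mul_fromBlocks, transpose_fromCols, fromCols_mul_fromRows] using
    h.map_mulVec (fromCols (1 : Matrix ι ι ℝ) 0)

lemma map_right_of_map_sumElim
    (h : IsGaussianLaw (P.map fun ω ↦ Sum.elim (X ω) (Y ω)) (Sum.elim m₁ m₂)
      (fromBlocks C₁₁ C₁₂ C₂₁ C₂₂)) :
    IsGaussianLaw (P.map Y) m₂ C₂₂ := by
  classical
  simpa [fromCols_mul_fromBlocks, transpose_fromCols, fromCols_mul_fromRows] using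
    h.map_mulVec (fromCols 0 (1 : Matrix κ κ ℝ))

lemma indepFun_of_map_sumElim [IsFiniteMeasure P]
    (h : IsGaussianLaw (P.map fun ω ↦ Sum.elim (X ω) (Y ω)) (Sum.elim m₁ m₂)
      (fromBlocks C₁₁ 0 0 C₂₂)) :
    IndepFun X Y P := by
  have hX := h.map_left_of_map_sumElim
  have hY := h.map_right_of_map_sumElim
  have hXY := hX.aemeasurable.prodMk hY.aemeasurable
  rw [indepFun_iff_map_prod_eq_prod_map_map hX.aemeasurable hY.aemeasurable]
  refine measurableEmbedding_sumElim.map_injective ?_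
  rw [AEMeasurable.map_map_of_aemeasurable
    measurableEmbedding_sumElim.measurable.aemeasurable hXY]
  exact h.unique (hX.map_sumElim_prod hY)

lemma map_sumElim_residual (K : Matrix ι κ ℝ) (hK : K * C₂₂ = C₁₂) (hK' : C₂₂ * Kᵀ = C₂₁)
    (h : IsGaussianLaw (P.map fun ω ↦ Sum.elim (X ω) (Y ω)) (Sum.elim m₁ m₂)
      (fromBlocks C₁₁ C₁₂ C₂₁ C₂₂)) :
    IsGaussianLaw (P.map fun ω ↦ Sum.elim (X ω - K *ᵥ Y ω) (Y ω)) (Sum.elim (m₁ - K *ᵥ m₂) m₂)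
      (fromBlocks (C₁₁ - K * C₂₁) 0 0 C₂₂) := by
  classical
  simpa [fromBlocks_mulVec, fromBlocks_multiply, fromBlocks_transpose, ← sub_eq_add_neg,
    Matrix.neg_mul, Matrix.mul_neg, neg_mulVec, hK, hK'] using
    h.map_mulVec (fromBlocks 1 (-K) 0 (1 : Matrix κ κ ℝ))

theorem ae_condDistrib_of_map_sumElim [IsFiniteMeasure P] (K : Matrix ι κ ℝ)
    (hK : K * C₂₂ = C₁₂) (hK' : C₂₂ * Kᵀ = C₂₁)
    (h : IsGaussianLaw (P.map fun ω ↦ Sum.elim (X ω) (Y ω)) (Sum.elim m₁ m₂)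
      (fromBlocks C₁₁ C₁₂ C₂₁ C₂₂)) :
    ∀ᵐ y ∂P.map Y,
      IsGaussianLaw (condDistrib X Y P y) (m₁ + K *ᵥ (y - m₂)) (C₁₁ - K * C₂₁) := by
  have hres := h.map_sumElim_residual K hK hK'
  have hR := hres.map_left_of_map_sumElim
  have hcond := ae_condDistrib_eq_map_of_indepFun
    h.map_right_of_map_sumElim.aemeasurable hR.aemeasurable hres.indepFun_of_map_sumElim.symm
    (f := fun p : (κ → ℝ) × (ι → ℝ) ↦ p.2 + K *ᵥ p.1) (by fun_prop)
  simp only [sub_add_cancel] at hcond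
  filter_upwards [hcond] with y hy
  have hmean : m₁ + K *ᵥ (y - m₂) = m₁ - K *ᵥ m₂ + K *ᵥ y := by rw [mulVec_sub]; abel
  rw [hy, hmean]
  exact hR.map_add_const (K *ᵥ y)

end Joint

end IsGaussianLaw

section LinearModel

variable {ι κ Ω : Type*} [Fintype ι] [Fintype κ] [MeasurableSpace Ω] {P : Measure Ω}
  [IsFiniteMeasure P] {X : Ω → ι → ℝ} {E : Ω → κ → ℝ} {x₀ : ι → ℝ} {e₀ : κ → ℝ}
  {Γ : Matrix ι ι ℝ} {S : Matrix κ κ ℝ}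

lemma IsGaussianLaw.map_sumElim_linearModel (hX : IsGaussianLaw (P.map X) x₀ Γ)
    (hE : IsGaussianLaw (P.map E) e₀ S) (hXE : IndepFun X E P) (A : Matrix ι κ ℝ) :
    IsGaussianLaw (P.map fun ω ↦ Sum.elim (X ω) (Aᵀ *ᵥ X ω + E ω))
      (Sum.elim x₀ (Aᵀ *ᵥ x₀ + e₀)) (fromBlocks Γ (Γ * A) (Aᵀ * Γ) (Aᵀ * Γ * A + S)) := by
  classical
  simpa [fromBlocks_mulVec, fromBlocks_multiply, fromBlocks_transpose] using
    (hX.map_sumElim_of_indepFun hE hXE).map_mulVec (fromBlocks (1 : Matrix ι ι ℝ) 0 Aᵀ 1)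

theorem posterior_gaussian_linear_model_general [DecidableEq κ]
    (hX : IsGaussianLaw (P.map X) x₀ Γ) (hE : IsGaussianLaw (P.map E) e₀ S)
    (hXE : IndepFun X E P) (hΓ : Γ.IsSymm) (hS : S.IsSymm) (A : Matrix ι κ ℝ)
    (hM : IsUnit (Aᵀ * Γ * A + S)) :
    ∀ᵐ b ∂P.map (fun ω ↦ Aᵀ *ᵥ X ω + E ω),
      IsGaussianLaw (condDistrib X (fun ω ↦ Aᵀ *ᵥ X ω + E ω) P b)
        (x₀ + (Γ * A * (Aᵀ * Γ * A + S)⁻¹) *ᵥ (b - (Aᵀ *ᵥ x₀ + e₀)))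
        (Γ - Γ * A * (Aᵀ * Γ * A + S)⁻¹ * Aᵀ * Γ) := by
  have hdet := (isUnit_iff_isUnit_det _).1 hM
  have hMsymm : (Aᵀ * Γ * A + S)ᵀ = Aᵀ * Γ * A + S := by
    simp only [transpose_add, transpose_mul, transpose_transpose, hΓ.eq, hS.eq, Matrix.mul_assoc]
  have hK : Γ * A * (Aᵀ * Γ * A + S)⁻¹ * (Aᵀ * Γ * A + S) = Γ * A :=
    nonsing_inv_mul_cancel_right _ _ hdet
  have hK' : (Aᵀ * Γ * A + S) * (Γ * A * (Aᵀ * Γ * A + S)⁻¹)ᵀ = Aᵀ * Γ := by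
    simpa only [transpose_mul, hMsymm, hΓ.eq] using congrArg transpose hK
  simpa only [Matrix.mul_assoc] using
    (hX.map_sumElim_linearModel hE hXE A).ae_condDistrib_of_map_sumElim _ hK hK'

end LinearModel

/-- for independent `X ~ N(x₀, Γ)` and `E ~ N(0, Σ)` with `Γ`, `Σ` symmetric positive
definite, and `B = Aᵀ X + E`, for (law of `B`)-almost every `b` the regular conditional
distribution of `X` given `B = b` is the Gaussian `N(x̄, C)` with
`x̄ = x₀ + Γ A (Aᵀ Γ A + Σ)⁻¹ (b − Aᵀ x₀)` and `C = Γ − Γ A (Aᵀ Γ A + Σ)⁻¹ Aᵀ Γ`. -/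
theorem posterior_gaussian_linear_model
    {Ω : Type*} [MeasurableSpace Ω] (Pr : Measure Ω) [IsProbabilityMeasure Pr]
    {n m : ℕ} (X : Ω → Fin n → ℝ) (E : Ω → Fin m → ℝ)
    (hX : Measurable X) (hE : Measurable E) (hXE : IndepFun X E Pr)
    (x₀ : Fin n → ℝ) (Γ : Matrix (Fin n) (Fin n) ℝ) (S : Matrix (Fin m) (Fin m) ℝ)
    (hG : Γ.PosDef) (hS : S.PosDef)
    (hlawX : IsGaussianLaw (Measure.map X Pr) x₀ Γ)
    (hlawE : IsGaussianLaw (Measure.map E Pr) 0 S)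
    (A : Matrix (Fin n) (Fin m) ℝ)
    (B : Ω → Fin m → ℝ) (hB : B = fun ω => Aᵀ *ᵥ X ω + E ω) :
    ∀ᵐ b ∂(Measure.map B Pr),
      IsGaussianLaw (condDistrib X B Pr b)
        (x₀ + (Γ * A * (Aᵀ * Γ * A + S)⁻¹) *ᵥ (b - Aᵀ *ᵥ x₀))
        (Γ - Γ * A * (Aᵀ * Γ * A + S)⁻¹ * Aᵀ * Γ) := by
  simpa only [hB, add_zero] using posterior_gaussian_linear_model_general
    hlawX hlawE hXE (by simpa using hG.isHermitian) (by simpa using hS.isHermitian) A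
    (posDef_transpose_mul_mul_same_add hG.posSemidef hS A).isUnit
end

section
/- Let H and K be real separable Hilbert spaces, A : K → H a continuous linear map, φ_1, …, φ_n ∈ H and ψ_1, …, ψ_m ∈ K. Let X : Ω → H and E : Ω → K be independent random variables whose laws are centered Gaussian measures on H and K with covariance operators C_X : H → H and C_E : K → K respectively, i.e., E[⟪u, X⟫⟪v, X⟫] = ⟪u, C_X v⟫ for all u, v ∈ H and E[⟪ψ, E⟫⟪ψ', E⟫] = ⟪ψ, C_E ψ'⟫ for all ψ, ψ' ∈ K. Define the random vectors M ∈ ℝ^n by M_j = ⟪φ_j, X⟫ and Z ∈ ℝ^m by Z_k = ⟪A ψ_k, X⟫ + ⟪ψ_k, E⟫, and the matrices C11_{jk} = ⟪φ_j, C_X φ_k⟫, C12_{jk} = ⟪φ_j, C_X A ψ_k⟫, C21 = C12ᵀ, and C22_{jk} = ⟪A ψ_j, C_X A ψ_k⟫ + ⟪ψ_j, C_E ψ_k⟫. If C22 is invertible, then for (law of Z)-almost every z ∈ ℝ^m, the regular conditional distribution of M given Z = z is the multivariate Gaussian with mean C12 (C22)⁻¹ z and covariance matrix C11 − C12 (C22)⁻¹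 C21. -/
open MeasureTheory ProbabilityTheory Matrix
open scoped RealInnerProductSpace

/-- A centered Gaussian measure on a real inner product space: every one-dimensional projection
`x ↦ ⟪u, x⟫` has a centered real Gaussian law. -/
def IsCenteredGaussianMeasure {H : Type*} [NormedAddCommGroup H] [InnerProductSpace ℝ H]
    [MeasurableSpace H] (μ : Measure H) : Prop :=
  IsProbabilityMeasure μ ∧
    ∀ u : H, ∃ v : NNReal, Measure.map (fun x => ⟪u, x⟫) μ = gaussianReal 0 v

/-!
The pair `(X, E)` is a centered Gaussian random element of `H ⊕ K`, and `M` and `Z` consist of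
finitely many of its one-dimensional projections, so `(M, Z)` is a jointly Gaussian vector and only
its covariance matrices matter. If `G` solves the normal equations `G * C22 = C12`, the residual
`M - G Z` is uncorrelated with `Z`, hence independent of it. Given `Z = z`, the vector
`M = (M - G Z) + G Z` is therefore distributed as the residual shifted by `G z`.
-/

section

variable {Ω : Type*} [MeasurableSpace Ω] {P : Measure Ω}
variable {ι κ : Type*}

section CrossCovariance

/-- The matrix of covariances `Cov(X i, Y j)` of two families of real random variables, each given
as a random vector. -/
noncomputable def crossCov (X : Ω → ι → ℝ) (Y : Ω → κ → ℝ) (P : Measure Ω) : Matrix ι κ ℝ :=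
  Matrix.of fun i j => cov[fun ω => X ω i, fun ω => Y ω j; P]

lemma crossCov_transpose (X : Ω → ι → ℝ) (Y : Ω → κ → ℝ) :
    (crossCov X Y P)ᵀ = crossCov Y X P := by
  ext i j
  exact covariance_comm _ _

variable [Fintype ι] [Fintype κ]

lemma memLp_mulVec (G : Matrix ι κ ℝ) {Y : Ω → κ → ℝ} {p : ENNReal} (hY : MemLp Y p P) :
    MemLp (fun ω => G *ᵥ Y ω) p P :=
  G.mulVecLin.toContinuousLinearMap.comp_memLp' hY

variable [IsFiniteMeasure P]

lemma crossCov_sub_left {X X' : Ω → ι → ℝ} {Y : Ω → κ → ℝ} (hX : MemLp X 2 P)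
    (hX' : MemLp X' 2 P) (hY : MemLp Y 2 P) :
    crossCov (fun ω => X ω - X' ω) Y P = crossCov X Y P - crossCov X' Y P := by
  ext i j
  exact covariance_fun_sub_left (hX.eval i) (hX'.eval i) (hY.eval j)

lemma crossCov_mulVec_left {ι' : Type*} (G : Matrix ι' ι ℝ) {X : Ω → ι → ℝ} {Y : Ω → κ → ℝ}
    (hX : MemLp X 2 P) (hY : MemLp Y 2 P) :
    crossCov (fun ω => G *ᵥ X ω) Y P = G * crossCov X Y P := by
  ext i j
  calc
    cov[fun ω => ∑ k, G i k * X ω k, fun ω => Y ω j; P]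
      = ∑ k, cov[fun ω => G i k * X ω k, fun ω => Y ω j; P] :=
        covariance_fun_sum_left (fun k => (hX.eval k).const_mul _) (hY.eval j)
    _ = ∑ k, G i k * cov[fun ω => X ω k, fun ω => Y ω j; P] := by
        simp only [covariance_const_mul_left]

lemma variance_dotProduct (t : ι → ℝ) {X : Ω → ι → ℝ} (hX : MemLp X 2 P) :
    Var[fun ω => t ⬝ᵥ X ω; P] = t ⬝ᵥ crossCov X X P *ᵥ t := by
  have htX : ∀ i, MemLp (fun ω => t i * X ω i) 2 P := fun i => (hX.eval i).const_mul _
  calc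
    Var[fun ω => ∑ i, t i * X ω i; P]
      = ∑ i, ∑ j, cov[fun ω => t i * X ω i, fun ω => t j * X ω j; P] := by
        rw [← covariance_self (memLp_finsetSum _ fun i _ => htX i).aemeasurable,
          covariance_fun_sum_fun_sum htX htX]
    _ = ∑ i, t i * ∑ j, crossCov X X P i j * t j := by
        simp only [covariance_const_mul_left, covariance_const_mul_right, Finset.mul_sum]
        exact Finset.sum_congr rfl fun i _ => Finset.sum_congr rfl fun j _ => by
          rw [crossCov, Matrix.of_apply, mul_comm (t j), mul_assoc]

end CrossCovariance

section Residual

variable [Fintype ι] [Fintype κ] [IsFiniteMeasure P] {M : Ω → ι → ℝ} {Z : Ω → κ → ℝ}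
  {G : Matrix ι κ ℝ}

lemma crossCov_residual_right_eq_zero (hM : MemLp M 2 P) (hZ : MemLp Z 2 P)
    (hG : G * crossCov Z Z P = crossCov M Z P) :
    crossCov (fun ω => M ω - G *ᵥ Z ω) Z P = 0 := by
  rw [crossCov_sub_left hM (memLp_mulVec G hZ) hZ, crossCov_mulVec_left G hZ hZ, hG, sub_self]

lemma crossCov_residual_self (hM : MemLp M 2 P) (hZ : MemLp Z 2 P)
    (hG : G * crossCov Z Z P = crossCov M Z P) :
    crossCov (fun ω => M ω - G *ᵥ Z ω) (fun ω => M ω - G *ᵥ Z ω) P =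
      crossCov M M P - G * (crossCov M Z P)ᵀ := by
  set R : Ω → ι → ℝ := fun ω => M ω - G *ᵥ Z ω
  have hGZ : MemLp (fun ω => G *ᵥ Z ω) 2 P := memLp_mulVec G hZ
  have hR2 : MemLp R 2 P := hM.sub hGZ
  have hZR : crossCov Z R P = 0 := by
    rw [← crossCov_transpose, crossCov_residual_right_eq_zero hM hZ hG, transpose_zero]
  have hMR : crossCov R R P = crossCov M R P := by
    rw [crossCov_sub_left hM hGZ hR2, crossCov_mulVec_left G hZ hR2, hZR, Matrix.mul_zero, sub_zero]
  calc
    crossCov R R P = (crossCov M R P)ᵀ := by rw [← hMR, crossCov_transpose]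
    _ = crossCov R M P := crossCov_transpose M R
    _ = crossCov M M P - G * (crossCov M Z P)ᵀ := by
      rw [crossCov_sub_left hM hGZ hM, crossCov_mulVec_left G hZ hM, crossCov_transpose]

end Residual

lemma condDistrib_ae_eq_map_of_indepFun {β γ δ : Type*} [MeasurableSpace β] [MeasurableSpace γ]
    [MeasurableSpace δ] [StandardBorelSpace δ] [Nonempty δ] [IsFiniteMeasure P]
    {Z : Ω → β} {R : Ω → γ} {f : β × γ → δ} (hZ : AEMeasurable Z P) (hR : AEMeasurable R P)
    (hZR : IndepFun Z R P) (hf : Measurable f) :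
    ∀ᵐ z ∂P.map Z, condDistrib (fun ω => f (Z ω, R ω)) Z P z = (P.map R).map fun r => f (z, r) := by
  let η : Kernel β δ := (Kernel.id ×ₖ Kernel.const β (P.map R)).map f
  have hη : ∀ z, η z = (P.map R).map fun r => f (z, r) := fun z => by
    rw [Kernel.map_apply _ hf, Kernel.prod_apply, Kernel.id_apply, Kernel.const_apply,
      Measure.dirac_prod, Measure.map_map hf (by fun_prop)]
    rfl
  have hjoint : P.map (fun ω => (Z ω, f (Z ω, R ω))) = P.map Z ⊗ₘ η := by
    have hT : Measurable fun p : β × γ => (p.1, f p) := by fun_prop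
    calc
      P.map (fun ω => (Z ω, f (Z ω, R ω)))
        = (P.map fun ω => (Z ω, R ω)).map fun p => (p.1, f p) :=
          (AEMeasurable.map_map_of_aemeasurable hT.aemeasurable (hZ.prodMk hR)).symm
      _ = ((P.map Z).prod (P.map R)).map fun p => (p.1, f p) := by
          rw [hZR.map_prod_eq_prod_map_map hZ hR]
      _ = P.map Z ⊗ₘ η := by
          ext s hs
          rw [Measure.map_apply hT hs, Measure.prod_apply (hT hs), Measure.compProd_apply hs]
          refine lintegral_congr fun z => ?_
          rw [hη, Measure.map_apply (by fun_prop) (measurable_prodMk_left hs)]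
          rfl
  filter_upwards [condDistrib_ae_eq_of_measure_eq_compProd Z
    (hf.comp_aemeasurable (hZ.prodMk hR)) hjoint] with z hz
  exact hz.trans (hη z)

section GaussianVector

variable [Fintype ι]

lemma isGaussianLaw_map_of_hasGaussianLaw {Y : Ω → ι → ℝ} (hY : HasGaussianLaw Y P) :
    IsGaussianLaw (P.map Y) P[Y] (crossCov Y Y P) := by
  have := hY.isProbabilityMeasure
  refine ⟨Measure.isProbabilityMeasure_map hY.aemeasurable, fun t => ?_⟩
  let L : StrongDual ℝ (ι → ℝ) := (dotProductBilin ℝ ℝ t).toContinuousLinearMap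
  have hmean : ∫ ω, t ⬝ᵥ Y ω ∂P = t ⬝ᵥ P[Y] := L.integral_comp_comm hY.integrable
  calc
    ∫ x, Complex.exp (Complex.I * ((t ⬝ᵥ x : ℝ) : ℂ)) ∂P.map Y
      = charFunDual (P.map Y) L := by
        simp only [mul_comm Complex.I]
        rfl
    _ = Complex.exp ((∫ ω, t ⬝ᵥ Y ω ∂P : ℝ) * Complex.I - Var[fun ω => t ⬝ᵥ Y ω; P] / 2) :=
        hY.charFunDual_map_eq_fun L
    _ = _ := by rw [hmean, variance_dotProduct t hY.memLp_two, mul_comm Complex.I]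

lemma IsGaussianLaw.map_add_const_s10 {μ : Measure (ι → ℝ)} {m : ι → ℝ} {C : Matrix ι ι ℝ}
    (hμ : IsGaussianLaw μ m C) (a : ι → ℝ) : IsGaussianLaw (μ.map (· + a)) (m + a) C := by
  have := hμ.1
  refine ⟨Measure.isProbabilityMeasure_map (by fun_prop), fun t => ?_⟩
  rw [integral_map (by fun_prop) (by fun_prop)]
  simp only [dotProduct_add, Complex.ofReal_add, mul_add, Complex.exp_add]
  rw [integral_mul_const, hμ.2 t, ← Complex.exp_add]
  congr 1
  ring

variable [Fintype κ]

theorem condDistrib_isGaussianLaw_of_hasGaussianLaw [IsFiniteMeasure P] {M : Ω → ι → ℝ}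
    {Z : Ω → κ → ℝ} (hMZ : HasGaussianLaw (fun ω => (M ω, Z ω)) P) {G : Matrix ι κ ℝ}
    (hG : G * crossCov Z Z P = crossCov M Z P) :
    ∀ᵐ z ∂P.map Z, IsGaussianLaw (condDistrib M Z P z) (P[M] + G *ᵥ (z - P[Z]))
      (crossCov M M P - G * (crossCov M Z P)ᵀ) := by
  let R : Ω → ι → ℝ := fun ω => M ω - G *ᵥ Z ω
  let gain : (κ → ℝ) →L[ℝ] ι → ℝ := G.mulVecLin.toContinuousLinearMap
  have hRZ : HasGaussianLaw (fun ω => (R ω, Z ω)) P :=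
    hMZ.map_fun ((ContinuousLinearMap.fst ℝ (ι → ℝ) (κ → ℝ) - gain.comp (.snd ℝ _ _)).prod
      (.snd ℝ _ _))
  have hM2 : MemLp M 2 P := hMZ.fst.memLp_two
  have hZ2 : MemLp Z 2 P := hMZ.snd.memLp_two
  have hindep : IndepFun R Z P :=
    hRZ.indepFun_of_covariance_eval (X := fun i ω => R ω i) (Y := fun k ω => Z ω k) fun i k =>
      congrFun₂ (crossCov_residual_right_eq_zero hM2 hZ2 hG) i k
  have hmean : P[R] = P[M] - G *ᵥ P[Z] := by
    rw [integral_sub hMZ.fst.integrable (memLp_mulVec G hZ2 |>.integrable one_le_two)]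
    exact congrArg _ (gain.integral_comp_comm hMZ.snd.integrable)
  have hcond := condDistrib_ae_eq_map_of_indepFun hZ2.aemeasurable hRZ.fst.aemeasurable hindep.symm
    (f := fun p : (κ → ℝ) × (ι → ℝ) => p.2 + gain p.1) (by fun_prop)
  have hM : (fun ω => R ω + gain (Z ω)) = M := funext fun ω => sub_add_cancel _ _
  rw [hM] at hcond
  filter_upwards [hcond] with z hz
  have hshift := (isGaussianLaw_map_of_hasGaussianLaw hRZ.fst).map_add_const_s10 (G *ᵥ z)
  rw [crossCov_residual_self hM2 hZ2 hG, hmean] at hshift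
  have hcenter : P[M] - G *ᵥ P[Z] + G *ᵥ z = P[M] + G *ᵥ (z - P[Z]) := by
    rw [mulVec_sub, sub_add_eq_add_sub, add_sub_assoc]
  rw [hz, ← hcenter]
  exact hshift

end GaussianVector

section LinearProcess

variable {V W : Type*} [AddCommGroup V] [Module ℝ V] [AddCommGroup W] [Module ℝ W]

lemma hasGaussianLaw_pi_of_linearMap [Finite ι] {T : V →ₗ[ℝ] Ω → ℝ}
    (hT : ∀ v, HasGaussianLaw (T v) P) (v : ι → V) :
    HasGaussianLaw (fun ω i => T (v i) ω) P := by
  classical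
  have := Fintype.ofFinite ι
  have hmeas : AEMeasurable (fun ω i => T (v i) ω) P :=
    aemeasurable_pi_lambda _ fun i => (hT (v i)).aemeasurable
  refine ⟨isGaussian_of_isGaussian_map fun L => ?_⟩
  have hL : L ∘ (fun ω i => T (v i) ω) = T (∑ i, L (Pi.single i 1) • v i) := by
    ext ω
    simp only [Function.comp_apply, map_sum, map_smul, Finset.sum_apply, Pi.smul_apply]
    rw [← Finset.univ_sum_single fun i => T (v i) ω, map_sum]
    refine Finset.sum_congr rfl fun i _ => ?_
    calc
      L (Pi.single i (T (v i) ω)) = L (T (v i) ω • Pi.single i 1) := by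
        rw [← Pi.single_smul, smul_eq_mul, mul_one]
      _ = L (Pi.single i 1) • T (v i) ω := by
        rw [map_smul, smul_eq_mul, smul_eq_mul, mul_comm]
  rw [AEMeasurable.map_map_of_aemeasurable (by fun_prop) hmeas, hL]
  exact (hT _).isGaussian_map

lemma hasGaussianLaw_prodMk_pi_of_linearMap [Finite ι] [Finite κ] {T : V →ₗ[ℝ] Ω → ℝ}
    (hT : ∀ v, HasGaussianLaw (T v) P) (v : ι → V) (w : κ → V) :
    HasGaussianLaw (fun ω => (fun i => T (v i) ω, fun k => T (w k) ω)) P := by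
  have := Fintype.ofFinite ι
  have := Fintype.ofFinite κ
  exact (hasGaussianLaw_pi_of_linearMap hT (Sum.elim v w)).map_equiv_fun
    (ContinuousLinearEquiv.sumPiEquivProdPi ℝ ι κ fun _ => ℝ)

lemma hasGaussianLaw_coprod_of_indepFun {S : V →ₗ[ℝ] Ω → ℝ} {T : W →ₗ[ℝ] Ω → ℝ}
    (hS : ∀ v, HasGaussianLaw (S v) P) (hT : ∀ w, HasGaussianLaw (T w) P)
    (hST : ∀ v w, IndepFun (S v) (T w) P) (p : V × W) : HasGaussianLaw (S.coprod T p) P :=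
  iIndepFun.hasGaussianLaw_add (hS p.1) (hT p.2) (hST p.1 p.2)

lemma covariance_coprod_of_indepFun [IsFiniteMeasure P] {S : V →ₗ[ℝ] Ω → ℝ} {T : W →ₗ[ℝ] Ω → ℝ}
    (hS : ∀ v, MemLp (S v) 2 P) (hT : ∀ w, MemLp (T w) 2 P)
    (hST : ∀ v w, IndepFun (S v) (T w) P) (p q : V × W) :
    cov[S.coprod T p, S.coprod T q; P] = cov[S p.1, S q.1; P] + cov[T p.2, T q.2; P] := by
  have hcross : ∀ v w, cov[S v, T w; P] = 0 := fun v w =>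
    (hST v w).covariance_eq_zero (hS v) (hT w)
  rw [LinearMap.coprod_apply, LinearMap.coprod_apply,
    covariance_add_left (hS _) (hT _) ((hS _).add (hT _)),
    covariance_add_right (hS _) (hS _) (hT _), covariance_add_right (hT _) (hS _) (hT _),
    hcross, covariance_comm (T _), hcross, add_zero, zero_add]

lemma integral_coprod {S : V →ₗ[ℝ] Ω → ℝ} {T : W →ₗ[ℝ] Ω → ℝ} (hS : ∀ v, Integrable (S v) P)
    (hT : ∀ w, Integrable (T w) P) (p : V × W) :
    P[S.coprod T p] = P[S p.1] + P[T p.2] := by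
  rw [LinearMap.coprod_apply, integral_add' (hS _) (hT _)]

theorem condDistrib_isGaussianLaw_of_linearMap [Fintype ι] [Fintype κ] [IsFiniteMeasure P]
    {T : V →ₗ[ℝ] Ω → ℝ} (hT : ∀ v, HasGaussianLaw (T v) P) (hT0 : ∀ v, P[T v] = 0)
    (v : ι → V) (w : κ → V) {C11 : Matrix ι ι ℝ} (hC11 : ∀ i j, cov[T (v i), T (v j); P] = C11 i j)
    {C12 : Matrix ι κ ℝ} (hC12 : ∀ i k, cov[T (v i), T (w k); P] = C12 i k)
    {C22 : Matrix κ κ ℝ} (hC22 : ∀ k l, cov[T (w k), T (w l); P] = C22 k l)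
    {G : Matrix ι κ ℝ} (hG : G * C22 = C12) :
    ∀ᵐ z ∂P.map (fun ω k => T (w k) ω),
      IsGaussianLaw (condDistrib (fun ω i => T (v i) ω) (fun ω k => T (w k) ω) P z)
        (G *ᵥ z) (C11 - G * C12ᵀ) := by
  obtain rfl := Matrix.ext hC11
  obtain rfl := Matrix.ext hC12
  obtain rfl := Matrix.ext hC22
  have hv0 : P[fun ω i => T (v i) ω] = 0 := by
    ext i
    rw [eval_integral fun i => (hT (v i)).integrable, hT0, Pi.zero_apply]
  have hw0 : P[fun ω k => T (w k) ω] = 0 := by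
    ext k
    rw [eval_integral fun k => (hT (w k)).integrable, hT0, Pi.zero_apply]
  have hcond := condDistrib_isGaussianLaw_of_hasGaussianLaw
    (hasGaussianLaw_prodMk_pi_of_linearMap hT v w) hG
  simp only [hv0, hw0, zero_add, sub_zero] at hcond
  exact hcond

end LinearProcess

section Projections

variable {H K : Type*} [NormedAddCommGroup H] [InnerProductSpace ℝ H]
  [NormedAddCommGroup K] [InnerProductSpace ℝ K]

/-- The one-dimensional projections `u ↦ ⟪u, X⟫` of a random element `X`, as a linear map into the
real random variables. -/
noncomputable def projections (X : Ω → H) : H →ₗ[ℝ] Ω → ℝ :=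
  LinearMap.pi fun ω => (innerₗ H).flip (X ω)

variable [MeasurableSpace H] [MeasurableSpace K] {X : Ω → H} {E : Ω → K}

lemma aemeasurable_of_isCenteredGaussianMeasure_map (hX : IsCenteredGaussianMeasure (P.map X)) :
    AEMeasurable X P :=
  AEMeasurable.of_map_ne_zero hX.1.ne_zero

lemma IsCenteredGaussianMeasure.exists_hasLaw_inner {μ : Measure H}
    (hμ : IsCenteredGaussianMeasure μ) (u : H) :
    ∃ v : NNReal, HasLaw (fun x => ⟪u, x⟫) (gaussianReal 0 v) μ := by
  obtain ⟨v, hv⟩ := hμ.2 u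
  exact ⟨v, AEMeasurable.of_map_ne_zero (hv ▸ IsProbabilityMeasure.ne_zero _), hv⟩

lemma exists_hasLaw_projections (hX : IsCenteredGaussianMeasure (P.map X)) (u : H) :
    ∃ v : NNReal, HasLaw (projections X u) (gaussianReal 0 v) P := by
  obtain ⟨v, hv⟩ := hX.exists_hasLaw_inner u
  exact ⟨v, hv.comp ⟨aemeasurable_of_isCenteredGaussianMeasure_map hX, rfl⟩⟩

lemma hasGaussianLaw_projections (hX : IsCenteredGaussianMeasure (P.map X)) (u : H) :
    HasGaussianLaw (projections X u) P :=
  let ⟨_, hv⟩ := exists_hasLaw_projections hX u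
  hv.hasGaussianLaw

lemma integral_projections (hX : IsCenteredGaussianMeasure (P.map X)) (u : H) :
    P[projections X u] = 0 := by
  obtain ⟨v, hv⟩ := exists_hasLaw_projections hX u
  rw [hv.integral_eq, integral_id_gaussianReal]

lemma covariance_projections (hX : IsCenteredGaussianMeasure (P.map X)) (u v : H) :
    cov[projections X u, projections X v; P] = ∫ ω, ⟪u, X ω⟫ * ⟪v, X ω⟫ ∂P := by
  simp only [covariance, integral_projections hX, sub_zero]
  rfl

lemma indepFun_projections (hX : IsCenteredGaussianMeasure (P.map X))
    (hE : IsCenteredGaussianMeasure (P.map E)) (hXE : IndepFun X E P) (u : H) (w : K) :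
    IndepFun (projections X u) (projections E w) P :=
  let ⟨_, hu⟩ := hX.exists_hasLaw_inner u
  let ⟨_, hw⟩ := hE.exists_hasLaw_inner w
  hXE.comp₀ (aemeasurable_of_isCenteredGaussianMeasure_map hX)
    (aemeasurable_of_isCenteredGaussianMeasure_map hE) hu.aemeasurable hw.aemeasurable

end Projections

theorem posterior_of_finite_measurements_general [Fintype ι] [Fintype κ] [IsFiniteMeasure P]
    {H K : Type*} [NormedAddCommGroup H] [InnerProductSpace ℝ H] [MeasurableSpace H]
    [NormedAddCommGroup K] [InnerProductSpace ℝ K] [MeasurableSpace K]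
    (φ : ι → H) (χ : κ → H) (ψ : κ → K) {X : Ω → H} {E : Ω → K} (hXE : IndepFun X E P)
    (hlawX : IsCenteredGaussianMeasure (P.map X)) (hlawE : IsCenteredGaussianMeasure (P.map E))
    {CX : H → H} {CE : K → K}
    (hCX : ∀ u v : H, ∫ ω, ⟪u, X ω⟫ * ⟪v, X ω⟫ ∂P = ⟪u, CX v⟫)
    (hCE : ∀ w w' : K, ∫ ω, ⟪w, E ω⟫ * ⟪w', E ω⟫ ∂P = ⟪w, CE w'⟫)
    {C11 : Matrix ι ι ℝ} (hC11 : ∀ j k, C11 j k = ⟪φ j, CX (φ k)⟫)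
    {C12 : Matrix ι κ ℝ} (hC12 : ∀ j k, C12 j k = ⟪φ j, CX (χ k)⟫)
    {C22 : Matrix κ κ ℝ} (hC22 : ∀ j k, C22 j k = ⟪χ j, CX (χ k)⟫ + ⟪ψ j, CE (ψ k)⟫)
    {G : Matrix ι κ ℝ} (hG : G * C22 = C12) :
    ∀ᵐ z ∂P.map (fun ω k => ⟪χ k, X ω⟫ + ⟪ψ k, E ω⟫),
      IsGaussianLaw
        (condDistrib (fun ω j => ⟪φ j, X ω⟫) (fun ω k => ⟪χ k, X ω⟫ + ⟪ψ k, E ω⟫) P z)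
        (G *ᵥ z) (C11 - G * C12ᵀ) := by
  let T : H × K →ₗ[ℝ] Ω → ℝ := (projections X).coprod (projections E)
  have hind := indepFun_projections hlawX hlawE hXE
  have hTG : ∀ p, HasGaussianLaw (T p) P := hasGaussianLaw_coprod_of_indepFun
    (hasGaussianLaw_projections hlawX) (hasGaussianLaw_projections hlawE) hind
  have hT0 : ∀ p, P[T p] = 0 := fun p => by
    rw [integral_coprod (fun u => (hasGaussianLaw_projections hlawX u).integrable)
      (fun w => (hasGaussianLaw_projections hlawE w).integrable), integral_projections hlawX,
      integral_projections hlawE, add_zero]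
  have hTcov : ∀ p q, cov[T p, T q; P] = ⟪p.1, CX q.1⟫ + ⟪p.2, CE q.2⟫ := fun p q => by
    rw [← hCX, ← hCE, ← covariance_projections hlawX, ← covariance_projections hlawE]
    exact covariance_coprod_of_indepFun (fun u => (hasGaussianLaw_projections hlawX u).memLp_two)
      (fun w => (hasGaussianLaw_projections hlawE w).memLp_two) hind p q
  have hM : (fun ω j => T (φ j, 0) ω) = fun ω j => ⟪φ j, X ω⟫ := by
    ext ω j
    exact (congrArg (⟪φ j, X ω⟫ + ·) (inner_zero_left (E ω))).trans (add_zero _)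
  rw [← hM]
  refine condDistrib_isGaussianLaw_of_linearMap hTG hT0 (fun j => (φ j, 0)) (fun k => (χ k, ψ k))
    (fun j k => ?_) (fun j k => ?_) (fun j k => ?_) hG
  · rw [hTcov, inner_zero_left, add_zero, hC11]
  · rw [hTcov, inner_zero_left, add_zero, hC12]
  · rw [hTcov, hC22]

end

/-- posterior distribution of the finite measurement `M = Φ(X)` given the finite
indirect data `Z = Ψ(B)` in the model `B = A* X + E`: if the laws of `X` and `E` are centered
Gaussian with covariance operators `C_X`, `C_E`, and `C22` is invertible, then for
(law of `Z`)-almost every `z` the regular conditional distribution of `M` given `Z = z` is the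
Gaussian with mean `C12 C22⁻¹ z` and covariance `C11 − C12 C22⁻¹ C12ᵀ`. -/
theorem posterior_of_finite_measurements
    {Ω : Type*} [MeasurableSpace Ω] (Pr : Measure Ω) [IsProbabilityMeasure Pr]
    {H K : Type*}
    [NormedAddCommGroup H] [InnerProductSpace ℝ H] [CompleteSpace H]
    [TopologicalSpace.SeparableSpace H]
    [NormedAddCommGroup K] [InnerProductSpace ℝ K] [CompleteSpace K]
    [TopologicalSpace.SeparableSpace K]
    [MeasurableSpace H] [BorelSpace H] [MeasurableSpace K] [BorelSpace K]
    (A : K →L[ℝ] H) {n m : ℕ} (φ : Fin n → H) (ψ : Fin m → K)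
    (X : Ω → H) (E : Ω → K)
    (hX : Measurable X) (hE : Measurable E) (hXE : IndepFun X E Pr)
    (hlawX : IsCenteredGaussianMeasure (Measure.map X Pr))
    (hlawE : IsCenteredGaussianMeasure (Measure.map E Pr))
    (CX : H →L[ℝ] H) (CE : K →L[ℝ] K)
    (hCX : ∀ u v : H, ∫ ω, ⟪u, X ω⟫ * ⟪v, X ω⟫ ∂Pr = ⟪u, CX v⟫)
    (hCE : ∀ w w' : K, ∫ ω, ⟪w, E ω⟫ * ⟪w', E ω⟫ ∂Pr = ⟪w, CE w'⟫)
    (M : Ω → Fin n → ℝ) (hM : M = fun ω j => ⟪φ j, X ω⟫)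
    (Z : Ω → Fin m → ℝ) (hZ : Z = fun ω k => ⟪A (ψ k), X ω⟫ + ⟪ψ k, E ω⟫)
    (C11 : Matrix (Fin n) (Fin n) ℝ) (hC11 : ∀ j k, C11 j k = ⟪φ j, CX (φ k)⟫)
    (C12 : Matrix (Fin n) (Fin m) ℝ) (hC12 : ∀ j k, C12 j k = ⟪φ j, CX (A (ψ k))⟫)
    (C22 : Matrix (Fin m) (Fin m) ℝ)
    (hC22 : ∀ j k, C22 j k = ⟪A (ψ j), CX (A (ψ k))⟫ + ⟪ψ j, CE (ψ k)⟫)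
    (hInv : IsUnit C22.det) :
    ∀ᵐ z ∂(Measure.map Z Pr),
      IsGaussianLaw (condDistrib M Z Pr z) ((C12 * C22⁻¹) *ᵥ z)
        (C11 - C12 * C22⁻¹ * C12ᵀ) := by
  subst hM hZ
  exact posterior_of_finite_measurements_general φ (A ∘ ψ) ψ hXE hlawX hlawE hCX hCE hC11 hC12 hC22
    (by rw [Matrix.mul_assoc, nonsing_inv_mul _ hInv, Matrix.mul_one])
end
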